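/- Stability of Schubert polynomials: for m < n and π ∈ S_m, the Schubert polynomial of π computed in S_m equals the Schubert polynomial of ι(π) computed in S_n, where ι: S_m ↪ S_n is the natural embedding fixing all points greater than m. -/

import Mathlib

open MvPolynomial Classical

/-- The action of the simple transposition `s_i` on polynomials, swapping `x_i` and `x_{i+1}`
(variables are 0-indexed: `X i` stands for `x_{i+1}`). -/
noncomputable def swapPoly (i : ℕ) (f : MvPolynomial ℕ ℤ) : MvPolynomial ℕ ℤ :=
  rename (Equiv.swap i (i + 1)) f

/-- The divided difference operator `∂_i f = (f - s_i f)/(x_i - x_{i+1})`. -/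
noncomputable def dd (i : ℕ) (f : MvPolynomial ℕ ℤ) : MvPolynomial ℕ ℤ :=
  if h : (X i - X (i + 1)) ∣ (f - swapPoly i f) then h.choose else 0

/-- Coxeter length of a permutation of `Fin n`, as the number of inversions. -/
def lenF (n : ℕ) (π : Equiv.Perm (Fin n)) : ℕ :=
  (Finset.univ.filter fun p : Fin n × Fin n => p.1 < p.2 ∧ π p.2 < π p.1).card

/-- The simple transposition `s_{i+1}` of `S_n` (0-indexed: swaps positions `i` and `i+1`),
junk value `1` if out of range. -/
def sFin (n i : ℕ) : Equiv.Perm (Fin n) :=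
  if h : i + 1 < n then Equiv.swap ⟨i, by omega⟩ ⟨i + 1, h⟩ else 1

/-- `S` is the family of Schubert polynomials of `S_n`: `S w₀ = x_1^{n-1} ⋯ x_{n-1}` for the
longest element `w₀`, and `S π = ∂_i S_{π s_i}` whenever `ℓ(π) < ℓ(π s_i)`. -/
def SchubertProp (n : ℕ) (S : Equiv.Perm (Fin n) → MvPolynomial ℕ ℤ) : Prop :=
  S Fin.revPerm = (∏ i ∈ Finset.range n, X i ^ (n - 1 - i)) ∧
  ∀ (π : Equiv.Perm (Fin n)) (i : ℕ), i + 1 < n →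
    lenF n π < lenF n (π * sFin n i) → S π = dd i (S (π * sFin n i))

theorem dd_X_mul (i : ℕ) (f : MvPolynomial ℕ ℤ) (hf : swapPoly i f = f) :
    dd i (X i * f) = f := by
  have hne : (X i - X (i + 1) : MvPolynomial ℕ ℤ) ≠ 0 := by
    intro h
    have := X_injective (R := ℤ) (sub_eq_zero.mp h)
    omega
  have he : X i * f - swapPoly i (X i * f) = (X i - X (i + 1)) * f := by
    have : swapPoly i (X i * f) = X (i + 1) * f := by
      unfold swapPoly at hf ⊢
      rw [map_mul, hf, rename_X, Equiv.swap_apply_left]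
    rw [this]; ring
  have hd : (X i - X (i + 1)) ∣ (X i * f - swapPoly i (X i * f)) := ⟨f, he⟩
  unfold dd
  rw [dif_pos hd]
  have h2 := hd.choose_spec
  exact (mul_left_cancel₀ hne (he.symm.trans h2)).symm

theorem swap_val (a x : ℕ) :
    Equiv.swap a (a + 1) x = if x = a then a + 1 else if x = a + 1 then a else x :=
  Equiv.swap_apply_def a (a + 1) x

theorem sFin_val (n i : ℕ) (hi : i + 1 < n) (p : Fin n) :
    ((sFin n i p : Fin n) : ℕ) = if (p : ℕ) = i then i + 1 else if (p : ℕ) = i + 1 then i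
      else p := by
  unfold sFin
  rw [dif_pos hi, Equiv.swap_apply_def]
  simp only [Fin.ext_iff]
  split_ifs <;> simp_all

theorem sFin_mul_self (n i : ℕ) : sFin n i * sFin n i = 1 := by
  unfold sFin
  split_ifs <;> simp

theorem lenF_lt (n i : ℕ) (hi : i + 1 < n) (π : Equiv.Perm (Fin n))
    (h : π ⟨i, by omega⟩ < π ⟨i + 1, hi⟩) : lenF n π < lenF n (π * sFin n i) := by
  unfold lenF
  have hss : ∀ p, sFin n i (sFin n i p) = p := fun p => by
    have := congrArg (fun e : Equiv.Perm (Fin n) => e p) (sFin_mul_self n i)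
    simpa using this
  have hinj : Function.Injective
      (fun p : Fin n × Fin n => (sFin n i p.1, sFin n i p.2)) := by
    rintro ⟨a, b⟩ ⟨c, d⟩ h
    simpa using h
  rw [← Finset.card_image_of_injective _ hinj]
  apply Finset.card_lt_card
  rw [Finset.ssubset_iff_of_subset]
  · refine ⟨(⟨i, by omega⟩, ⟨i + 1, hi⟩), ?_, ?_⟩
    · have h1 : sFin n i ⟨i, by omega⟩ = ⟨i + 1, hi⟩ := by
        apply Fin.ext; rw [sFin_val n i hi]; simp
      have h2 : sFin n i ⟨i + 1, hi⟩ = ⟨i, by omega⟩ := by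
        apply Fin.ext; rw [sFin_val n i hi]; simp
      refine Finset.mem_filter.mpr ⟨Finset.mem_univ _, by simp [Fin.lt_def], ?_⟩
      simp only [Equiv.Perm.mul_apply, h1, h2]
      exact h
    · simp only [Finset.mem_image, Finset.mem_filter, Finset.mem_univ, true_and, not_exists,
        not_and, Prod.mk.injEq]
      rintro ⟨a, b⟩ ⟨hab, -⟩ h1 h2
      have h1' := congrArg Fin.val h1
      have h2' := congrArg Fin.val h2
      simp only [sFin_val n i hi] at h1' h2'
      simp only [Fin.lt_def] at hab
      split_ifs at h1' h2' <;> omega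
  · intro q hq
    simp only [Finset.mem_image, Finset.mem_filter, Finset.mem_univ, true_and] at hq ⊢
    obtain ⟨⟨a, b⟩, ⟨hab, hπ⟩, rfl⟩ := hq
    simp only [Equiv.Perm.mul_apply, hss]
    refine ⟨?_, hπ⟩
    simp only at hab hπ
    have hnot : ¬ ((a : ℕ) = i ∧ (b : ℕ) = i + 1) := by
      rintro ⟨ha, hb⟩
      have ha' : a = ⟨i, Nat.lt_of_succ_lt hi⟩ := Fin.ext ha
      have hb' : b = ⟨i + 1, hi⟩ := Fin.ext hb
      rw [ha', hb'] at hπ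
      exact absurd hπ (not_lt.mpr h.le)
    rw [Fin.lt_def] at hab ⊢
    rw [sFin_val n i hi, sFin_val n i hi]
    split_ifs <;> omega

/-- One-line notation of the intermediate permutation: `k-1, ..., k-j, k, k-j-1, ..., 0`. -/
def gval (k j p : ℕ) : ℕ :=
  if p < j then k - 1 - p else if p = j then k else if p ≤ k then k - p else p

/-- Exponent vector of the Schubert polynomial of the intermediate permutation. -/
def gexp (k j p : ℕ) : ℕ := if p < j then k - 1 - p else k - p

theorem prod_step (n k j : ℕ) (hj : j < k) (hk : k < n) :
    dd j (∏ p ∈ Finset.range n, (X p : MvPolynomial ℕ ℤ) ^ gexp k j p) =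
      ∏ p ∈ Finset.range n, X p ^ gexp k (j + 1) p := by
  have h1 : (∏ p ∈ Finset.range n, (X p : MvPolynomial ℕ ℤ) ^ gexp k j p) =
      X j * ∏ p ∈ Finset.range n, X p ^ gexp k (j + 1) p := by
    have hm : j ∈ Finset.range n := by simp; omega
    rw [← Finset.mul_prod_erase _ _ hm, ← Finset.mul_prod_erase (Finset.range n)
      (fun p => (X p : MvPolynomial ℕ ℤ) ^ gexp k (j + 1) p) hm, ← mul_assoc, ← pow_succ']
    congr 1
    · congr 1
      unfold gexp
      simp
      omega
    · apply Finset.prod_congr rfl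
      intro p hp
      have : p ≠ j := (Finset.mem_erase.mp hp).1
      congr 1
      unfold gexp
      split_ifs <;> omega
  rw [h1]
  apply dd_X_mul
  unfold swapPoly
  rw [map_prod]
  apply Finset.prod_equiv (Equiv.swap j (j + 1))
  · intro p
    simp only [Finset.mem_range, swap_val]
    split_ifs <;> omega
  · intro p _
    rw [map_pow, rename_X]
    congr 1
    rw [swap_val]
    unfold gexp
    split_ifs <;> omega

theorem T_step (n : ℕ) (T : Equiv.Perm (Fin n) → MvPolynomial ℕ ℤ) (hT : SchubertProp n T)
    (k j : ℕ) (hk : k < n)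
    (ih : j ≤ k → ∀ σ : Equiv.Perm (Fin n), (∀ p : Fin n, (σ p : ℕ) = gval k j p) →
      T σ = ∏ p ∈ Finset.range n, X p ^ gexp k j p) :
    j + 1 ≤ k → ∀ σ : Equiv.Perm (Fin n), (∀ p : Fin n, (σ p : ℕ) = gval k (j + 1) p) →
      T σ = ∏ p ∈ Finset.range n, X p ^ gexp k (j + 1) p := by
  intro hj σ hσ
  have hjn : j + 1 < n := by omega
  have hlt : lenF n σ < lenF n (σ * sFin n j) := by
    apply lenF_lt n j hjn
    rw [Fin.lt_def, hσ, hσ]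
    simp only [gval]
    split_ifs <;> omega
  rw [hT.2 σ j hjn hlt, ih (by omega) (σ * sFin n j), prod_step n k j (by omega) hk]
  intro p
  rw [Equiv.Perm.mul_apply, hσ, sFin_val n j hjn]
  unfold gval
  split_ifs <;> omega

theorem T_val (n : ℕ) (T : Equiv.Perm (Fin n) → MvPolynomial ℕ ℤ) (hT : SchubertProp n T) :
    ∀ d k : ℕ, k + 1 + d = n → ∀ j, j ≤ k → ∀ σ : Equiv.Perm (Fin n),
      (∀ p : Fin n, (σ p : ℕ) = gval k j p) →
      T σ = ∏ p ∈ Finset.range n, X p ^ gexp k j p := by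
  intro d
  induction d with
  | zero =>
    intro k hk j
    induction j with
    | zero =>
      intro _ σ hσ
      have : σ = Fin.revPerm := by
        ext p
        rw [hσ p]
        have := p.2
        simp only [Fin.revPerm_apply, Fin.val_rev, gval]
        split_ifs <;> omega
      rw [this, hT.1]
      apply Finset.prod_congr rfl
      intro p _
      congr 1
      unfold gexp
      split_ifs <;> omega
    | succ j ih => exact T_step n T hT k j (by omega) ih
  | succ d ihd =>
    intro k hk j
    induction j with
    | zero =>
      intro _ σ hσ
      rw [ihd (k + 1) (by omega) (k + 1) le_rfl σ]
      · apply Finset.prod_congr rfl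
        intro p _
        congr 1
        unfold gexp
        split_ifs <;> omega
      · intro p
        rw [hσ p]
        unfold gval
        split_ifs <;> omega
    | succ j ih => exact T_step n T hT k j (by omega) ih

theorem exists_ascent (m : ℕ) (π : Equiv.Perm (Fin m)) (hπ : π ≠ Fin.revPerm) :
    ∃ (i : ℕ) (hi : i + 1 < m), π ⟨i, by omega⟩ < π ⟨i + 1, hi⟩ := by
  by_contra hcon
  push Not at hcon
  apply hπ
  have key : ∀ d i : ℕ, ∀ (h : i + d + 1 < m),
      π ⟨i + d + 1, h⟩ < π ⟨i, by omega⟩ := by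
    intro d
    have hs : ∀ i (hi : i + 1 < m), π ⟨i + 1, hi⟩ < π ⟨i, by omega⟩ := by
      intro i hi
      refine lt_of_le_of_ne (hcon i hi) ?_
      intro h
      have := congrArg Fin.val (π.injective h)
      simp at this
    induction d with
    | zero => intro i h; exact hs i h
    | succ d ih => intro i h; exact (hs (i + d + 1) h).trans (ih i (by omega))
  have hanti : StrictAnti π := by
    intro a b hab
    rw [Fin.lt_def] at hab
    have h := key (b - a - 1) a (by have := b.2; omega)
    have hb : (⟨a + (b - a - 1) + 1, by have := b.2; omega⟩ : Fin m) = b := by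
      apply Fin.ext; simp only; omega
    rwa [hb] at h
  have hmono : StrictMono (fun p => Fin.rev (π p)) := fun a b hab => by
    simpa using hanti hab
  have hid : (fun p => Fin.rev (π p)) = id := by
    apply (StrictMono.range_inj hmono strictMono_id).mp
    rw [Set.range_id, Set.range_eq_univ]
    exact Fin.rev_surjective.comp π.surjective
  ext p
  have := congrFun hid p
  simp only [id] at this
  rw [Fin.revPerm_apply, ← Fin.rev_rev (π p), this]

theorem lenF_le (n : ℕ) (π : Equiv.Perm (Fin n)) : lenF n π ≤ n * n := by
  unfold lenF
  refine (Finset.card_le_univ _).trans ?_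
  simp

/-- Stability of Schubert polynomials: for `m < n` and `π ∈ S_m`, the Schubert polynomial of
`π` computed in `S_m` equals that of its image `σ = ι(π) ∈ S_n` under the natural
embedding. -/
theorem schubert_stability (m n : ℕ) (hmn : m < n)
    (S : Equiv.Perm (Fin m) → MvPolynomial ℕ ℤ) (hS : SchubertProp m S)
    (T : Equiv.Perm (Fin n) → MvPolynomial ℕ ℤ) (hT : SchubertProp n T)
    (π : Equiv.Perm (Fin m)) (σ : Equiv.Perm (Fin n))
    (hσ : ∀ j : Fin n, (σ j : ℕ) =
      if h : (j : ℕ) < m then (π ⟨j, h⟩ : ℕ) else (j : ℕ)) :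
    S π = T σ := by
  suffices H : ∀ d : ℕ, ∀ (π : Equiv.Perm (Fin m)) (σ : Equiv.Perm (Fin n)),
      m * m - lenF m π = d → (∀ j : Fin n, (σ j : ℕ) =
      if h : (j : ℕ) < m then (π ⟨j, h⟩ : ℕ) else (j : ℕ)) → S π = T σ from
    H _ π σ rfl hσ
  clear hσ π σ
  intro d
  induction d using Nat.strong_induction_on with
  | _ d ih =>
    intro π σ hd hσ
    by_cases hπ : π = Fin.revPerm
    · subst hπ
      rw [hS.1, T_val n T hT (n - m - 1) m (by omega) m le_rfl σ]
      · rw [← Finset.prod_subset (Finset.range_subset_range.mpr hmn.le)]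
        · apply Finset.prod_congr rfl
          intro p hp
          have := Finset.mem_range.mp hp
          simp [gexp, this]
        · intro p _ hp
          have : m ≤ p := by simpa using hp
          have h0 : gexp m m p = 0 := by unfold gexp; split_ifs <;> omega
          rw [h0, pow_zero]
      · intro p
        rw [hσ p]
        simp only [Fin.revPerm_apply, Fin.val_rev, gval]
        split_ifs <;> omega
    · obtain ⟨i, hi, hasc⟩ := exists_ascent m π hπ
      have hin : i + 1 < n := by omega
      have h1 := lenF_lt m i hi π hasc
      have h2 : lenF n σ < lenF n (σ * sFin n i) := by
        apply lenF_lt n i hin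
        rw [Fin.lt_def, hσ, hσ]
        have hi' : i < m := by omega
        simpa [hi, hi'] using hasc
      rw [hS.2 π i hi h1, hT.2 σ i hin h2]
      congr 1
      have hle := lenF_le m (π * sFin m i)
      refine ih _ ?_ _ _ rfl ?_
      · omega
      · intro j
        rw [Equiv.Perm.mul_apply, hσ]
        by_cases hj : (j : ℕ) < m
        · have hs : (sFin n i j : ℕ) = (sFin m i ⟨j, hj⟩ : Fin m) := by
            rw [sFin_val n i hin, sFin_val m i hi]
          have hs' : (sFin n i j : ℕ) < m := by rw [hs]; exact Fin.is_lt _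
          rw [dif_pos hs', dif_pos hj, Equiv.Perm.mul_apply]
          congr 2
          exact Fin.ext hs
        · have hs : (sFin n i j : ℕ) = j := by
            rw [sFin_val n i hin]
            split_ifs <;> omega
          rw [dif_neg (by rw [hs]; exact hj), dif_neg hj, hs]
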